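/- Let μ, ν be Borel probability measures on ℝ with finite first moments and μ ≤_cd ν. Fix u, v ∈ (0,1) with u < v, let S_u be a shadow of μ_u in ν, let ρ ∈ 𝓜 satisfy μ_u + ρ = μ_v, and let ν' ∈ 𝓜 satisfy S_u + ν' = ν. Then c(u) = c(v) if and only if ρ ≤_pc ν', where c(w) = sup_{k∈ℝ} (C_{μ_w}(k) − C_ν(k)) for w ∈ (0,1). -/

import Mathlib

open MeasureTheory Set Filter

noncomputable section

/-- `η ∈ 𝓜`: a finite Borel measure on ℝ with finite first moment. -/
def MemM (η : MeasureTheory.Measure ℝ) : Prop :=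
  MeasureTheory.IsFiniteMeasure η ∧ MeasureTheory.Integrable (fun x : ℝ => x) η

/-- Convex-decreasing order `≤_cd`. -/
def LeCD (η χ : MeasureTheory.Measure ℝ) : Prop :=
  ∀ f : ℝ → ℝ, ConvexOn ℝ Set.univ f → Antitone f →
    MeasureTheory.Integrable f η → MeasureTheory.Integrable f χ →
    ∫ x, f x ∂η ≤ ∫ x, f x ∂χ

/-- Positive convex-decreasing order `≤_pcd`. -/
def LePCD (η χ : MeasureTheory.Measure ℝ) : Prop :=
  ∀ f : ℝ → ℝ, (∀ x, 0 ≤ f x) → ConvexOn ℝ Set.univ f → Antitone f →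
    MeasureTheory.Integrable f η → MeasureTheory.Integrable f χ →
    ∫ x, f x ∂η ≤ ∫ x, f x ∂χ

/-- Positive convex order `≤_pc`. -/
def LePC (η χ : MeasureTheory.Measure ℝ) : Prop :=
  ∀ f : ℝ → ℝ, (∀ x, 0 ≤ f x) → ConvexOn ℝ Set.univ f →
    MeasureTheory.Integrable f η → MeasureTheory.Integrable f χ →
    ∫ x, f x ∂η ≤ ∫ x, f x ∂χ

/-- A supermartingale coupling of `η` and `χ`. -/
def IsSupermartingaleCoupling (η χ : MeasureTheory.Measure ℝ)
    (π : MeasureTheory.Measure (ℝ × ℝ)) : Prop :=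
  MeasureTheory.IsProbabilityMeasure π ∧
  π.map Prod.fst = η ∧ π.map Prod.snd = χ ∧
  MeasureTheory.Integrable (fun p : ℝ × ℝ => p.2) π ∧
  ∀ B : Set ℝ, MeasurableSet B →
    ∫ p in B ×ˢ (Set.univ : Set ℝ), (p : ℝ × ℝ).2 ∂π ≤ ∫ x in B, x ∂η

/-- The potential function `P_η(k) = ∫ (k-x)⁺ η(dx)`. -/
def Ppot (η : MeasureTheory.Measure ℝ) (k : ℝ) : ℝ := ∫ x, max (k - x) 0 ∂η

/-- The potential function `C_η(k) = ∫ (x-k)⁺ η(dx)`. -/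
def Cpot (η : MeasureTheory.Measure ℝ) (k : ℝ) : ℝ := ∫ x, max (x - k) 0 ∂η

/-- The left-continuous quantile function `G_η(u) = sup {k | η((-∞,k]) < u}`. -/
def quantile (η : MeasureTheory.Measure ℝ) (u : ℝ) : ℝ :=
  sSup {k : ℝ | (η (Set.Iic k)).toReal < u}

/-- The lift `μ_u = μ|_{(-∞,G(u))} + (u - μ((-∞,G(u)))) δ_{G(u)}`, with `μ_0 = 0`, `μ_1 = μ`. -/
def muU (μ : MeasureTheory.Measure ℝ) (u : ℝ) : MeasureTheory.Measure ℝ :=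
  if u ≤ 0 then 0
  else if 1 ≤ u then μ
  else μ.restrict (Set.Iio (quantile μ u)) +
    (ENNReal.ofReal (u - (μ (Set.Iio (quantile μ u))).toReal)) •
      MeasureTheory.Measure.dirac (quantile μ u)

/-- `S` is a shadow of `μ` in `ν`. -/
def IsShadow (μ ν S : MeasureTheory.Measure ℝ) : Prop :=
  MemM S ∧ LeCD μ S ∧ (∀ A : Set ℝ, MeasurableSet A → S A ≤ ν A) ∧
  ∀ η : MeasureTheory.Measure ℝ, MemM η → LeCD μ η →
    (∀ A : Set ℝ, MeasurableSet A → η A ≤ ν A) → LeCD S η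

/-- `h` is the convex hull of `f`. -/
def IsConvexHullFn (f h : ℝ → ℝ) : Prop :=
  ConvexOn ℝ Set.univ h ∧ (∀ x, h x ≤ f x) ∧
  ∀ g : ℝ → ℝ, ConvexOn ℝ Set.univ g → (∀ x, g x ≤ f x) → ∀ x, g x ≤ h x

/-- The class `𝒟(a,b)`. -/
def MemD (a b : ℝ) (f : ℝ → ℝ) : Prop :=
  (∀ x, 0 ≤ f x) ∧ Monotone f ∧ ConvexOn ℝ Set.univ f ∧
  Filter.Tendsto f Filter.atBot (nhds 0) ∧
  Filter.Tendsto (fun z => f z - (a * z - b)) Filter.atTop (nhds 0)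

/-- The topological support of a measure. -/
def msupport (η : MeasureTheory.Measure ℝ) : Set ℝ :=
  {x : ℝ | ∀ U ∈ nhds x, η U ≠ 0}

/-!
Write `P` and `C` for the two potentials and let `S` be the shadow of `α` in `ν = S + ν'`. The
orders are comparisons of potentials: `≤_pcd` compares `P`, `≤_cd` compares `P` and the mass, and
`≤_pc` compares `P` and `C`. Since `ν - S` has the largest potential among the `ν - η` with
`α ≤_cd η ≤ ν`, the potential `P_{ν'}` is the convex hull of `P_ν - P_α`. Now `C - P` is affine, so
`C_{ν'}` is the convex hull of `C_ν - C_α + d`, where `d` is the mean of `α` minus that of `S`.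
As `C_{ν'}` vanishes at `+∞`, this gives `d = sup (C_α - C_ν)`. For `β = α + ρ` with `β ≤_pcd ν`,
equality of the two suprema means `C_ρ ≤ C_ν - C_α + d`, which by convexity of `C_ρ` is the same as
`C_ρ ≤ C_{ν'}`; the inequality `P_ρ ≤ P_{ν'}` follows in the same way from `P_β ≤ P_ν`.
-/

open scoped Topology ENNReal

section ConvexFunctions

variable {f : ℝ → ℝ}

lemma continuous_of_convexOn_univ (hf : ConvexOn ℝ univ f) : Continuous f :=
  continuousOn_univ.1 (hf.continuousOn isOpen_univ)

lemma convexOn_affine (a b : ℝ) : ConvexOn ℝ univ fun x => a * x + b := by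
  refine ⟨convex_univ, fun x _ y _ s t _ _ hst => le_of_eq ?_⟩
  simp only [smul_eq_mul]
  linear_combination (-b) * hst

lemma convexOn_comp_neg (hf : ConvexOn ℝ univ f) : ConvexOn ℝ univ fun x => f (-x) :=
  hf.comp_linearMap (-LinearMap.id)

lemma convexOn_comp_max {b : ℝ} (hf : ConvexOn ℝ univ f) (hmono : MonotoneOn f (Ici b)) :
    ConvexOn ℝ univ fun x => f (max x b) := by
  have hmax : ConvexOn ℝ univ fun x : ℝ => max x b :=
    (convexOn_id convex_univ).sup (convexOn_const b convex_univ)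
  have himage : Convex ℝ ((fun x : ℝ => max x b) '' univ) :=
    (isPreconnected_univ.image _ (by fun_prop)).ordConnected.convex
  exact (hf.subset (subset_univ _) himage).comp hmax
    (hmono.mono (image_subset_iff.2 fun x _ => le_max_right x b))

lemma convexOn_comp_min {b : ℝ} (hf : ConvexOn ℝ univ f) (hanti : AntitoneOn f (Iic b)) :
    ConvexOn ℝ univ fun x => f (min x b) := by
  have hmin : ConcaveOn ℝ univ fun x : ℝ => min x b :=
    (concaveOn_id convex_univ).inf (concaveOn_const b convex_univ)
  have himage : Convex ℝ ((fun x : ℝ => min x b) '' univ) :=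
    (isPreconnected_univ.image _ (by fun_prop)).ordConnected.convex
  exact (hf.subset (subset_univ _) himage).comp_concaveOn hmin
    (hanti.mono (image_subset_iff.2 fun x _ => min_le_right x b))

lemma antitoneOn_Iic_of_convexOn_of_isMin {b : ℝ} (hf : ConvexOn ℝ univ f)
    (hmin : ∀ x, f b ≤ f x) : AntitoneOn f (Iic b) := fun x _ _ hy hxy =>
  (hf.le_max_of_mem_Icc (mem_univ x) (mem_univ b) ⟨hxy, hy⟩).trans (max_le le_rfl (hmin x))

lemma monotoneOn_Ici_of_convexOn_of_isMin {b : ℝ} (hf : ConvexOn ℝ univ f)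
    (hmin : ∀ x, f b ≤ f x) : MonotoneOn f (Ici b) := fun _ hx y _ hxy =>
  (hf.le_max_of_mem_Icc (mem_univ b) (mem_univ y) ⟨hx, hxy⟩).trans (max_le (hmin y) le_rfl)

lemma secant_le_of_notMem_Ioo {x y p : ℝ} (hf : ConvexOn ℝ univ f) (hxy : x < y)
    (hp : p ∉ Ioo x y) : f x + slope f x y * (p - x) ≤ f p := by
  rw [slope_def_field]
  rcases lt_trichotomy p x with hpx | rfl | hxp
  · have h := hf.slope_mono_adjacent (mem_univ p) (mem_univ y) hpx hxy
    rw [div_le_iff₀ (sub_pos.2 hpx)] at h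
    linarith
  · simp
  · have hyp : y ≤ p := not_lt.1 fun hlt => hp ⟨hxp, hlt⟩
    have h := hf.secant_mono (mem_univ x) (mem_univ y) (mem_univ p) hxy.ne' hxp.ne' hyp
    rw [le_div_iff₀ (sub_pos.2 hxp)] at h
    linarith

lemma tendsto_atBot_atTop_of_convexOn (hf : ConvexOn ℝ univ f) (hmono : ¬ Monotone f) :
    Tendsto f atBot atTop := by
  simp only [Monotone, not_forall, not_le] at hmono
  obtain ⟨x, y, hle, hlt⟩ := hmono
  have hxy : x < y := hle.lt_of_ne fun h => hlt.ne (by rw [h])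
  have hslope : slope f x y < 0 := by
    rw [slope_def_field]
    exact div_neg_of_neg_of_pos (sub_neg.2 hlt) (sub_pos.2 hxy)
  have hsecant : Tendsto (fun p => f x + slope f x y * (p - x)) atBot atTop :=
    tendsto_atTop_add_const_left _ _
      ((tendsto_atBot_add_const_right _ (-x) tendsto_id).const_mul_atBot_of_neg hslope)
  refine tendsto_atTop_mono' _ ?_ hsecant
  filter_upwards [eventually_le_atBot x] with p hp
  exact secant_le_of_notMem_Ioo hf hxy fun h => h.1.not_ge hp

lemma tendsto_atTop_atTop_of_convexOn (hf : ConvexOn ℝ univ f) (hanti : ¬ Antitone f) :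
    Tendsto f atTop atTop := by
  have hneg : ¬ Monotone fun x => f (-x) := fun h =>
    hanti fun x y hxy => by simpa using h (neg_le_neg hxy)
  simpa [Function.comp_def] using
    (tendsto_atBot_atTop_of_convexOn (convexOn_comp_neg hf) hneg).comp tendsto_neg_atTop_atBot

lemma monotone_of_convexOn_of_tendsto_atBot {c : ℝ} (hf : ConvexOn ℝ univ f)
    (hlim : Tendsto f atBot (𝓝 c)) : Monotone f := by
  by_contra hmono
  exact not_tendsto_nhds_of_tendsto_atTop (tendsto_atBot_atTop_of_convexOn hf hmono) c hlim

lemma monotone_or_antitone_or_exists_isMin (hf : ConvexOn ℝ univ f) :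
    Monotone f ∨ Antitone f ∨ ∃ b, ∀ x, f b ≤ f x := by
  by_cases hmono : Monotone f
  · exact .inl hmono
  by_cases hanti : Antitone f
  · exact .inr (.inl hanti)
  refine .inr (.inr ((continuous_of_convexOn_univ hf).exists_forall_le ?_))
  rw [cocompact_eq_atBot_atTop]
  exact (tendsto_atBot_atTop_of_convexOn hf hmono).sup (tendsto_atTop_atTop_of_convexOn hf hanti)

lemma two_mul_le_add_of_convexOn (hf : ConvexOn ℝ univ f) (z δ : ℝ) :
    2 * f z ≤ f (z - δ) + f (z + δ) := by
  have h := hf.2 (mem_univ (z - δ)) (mem_univ (z + δ)) (by norm_num : (0 : ℝ) ≤ 1 / 2)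
    (by norm_num : (0 : ℝ) ≤ 1 / 2) (by norm_num)
  simp only [smul_eq_mul] at h
  rw [show 1 / 2 * (z - δ) + 1 / 2 * (z + δ) = z by ring] at h
  linarith

/- Maximum principle: at the leftmost point where a positive maximum is attained, the midpoint
inequality produces a maximum point further to the left. -/
lemma nonpos_of_frequently_two_mul_le {x y : ℝ} (hf : ContinuousOn f (Icc x y))
    (hmid : ∀ z ∈ Ioo x y, ∃ᶠ δ in 𝓝[>] 0, 2 * f z ≤ f (z - δ) + f (z + δ))
    (hx : f x ≤ 0) (hy : f y ≤ 0) {z : ℝ} (hz : z ∈ Icc x y) : f z ≤ 0 := by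
  by_contra! hpos
  obtain ⟨m₀, hm₀, hmax⟩ := isCompact_Icc.exists_isMaxOn ⟨z, hz⟩ hf
  obtain ⟨m, ⟨hm, hfm⟩, hleast⟩ :=
    (isCompact_Icc.of_isClosed_subset (hf.preimage_isClosed_of_isClosed isClosed_Icc
      (isClosed_singleton (x := f m₀))) inter_subset_left).exists_isLeast ⟨m₀, hm₀, rfl⟩
  have hfm : f m = f m₀ := hfm
  have hm_pos : 0 < f m := hfm ▸ hpos.trans_le (hmax hz)
  have hxm : x < m := hm.1.lt_of_ne (by rintro rfl; linarith)
  have hmy : m < y := hm.2.lt_of_ne (by rintro rfl; linarith)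
  have hnear : ∀ᶠ δ in 𝓝[>] (0 : ℝ), δ < min (m - x) (y - m) :=
    mem_nhdsWithin_of_mem_nhds (Iio_mem_nhds (lt_min (sub_pos.2 hxm) (sub_pos.2 hmy)))
  obtain ⟨δ, ⟨hδmid, hδ⟩, hδ0⟩ :=
    (((hmid m ⟨hxm, hmy⟩).and_eventually hnear).and_eventually self_mem_nhdsWithin).exists
  obtain ⟨hδx, hδy⟩ := lt_min_iff.1 hδ
  have hleft : m - δ ∈ Icc x y := ⟨by linarith, (sub_le_self m hδ0.le).trans hm.2⟩
  have hleft_max : f (m - δ) = f m₀ := by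
    have hright : f (m + δ) ≤ f m₀ :=
      hmax ⟨hm.1.trans (le_add_of_nonneg_right hδ0.le), by linarith⟩
    exact le_antisymm (hmax hleft) (by linarith)
  exact absurd (hleast ⟨hleft, hleft_max⟩) (sub_lt_self m hδ0).not_ge

lemma convexOn_univ_of_frequently_two_mul_le (hf : Continuous f)
    (hmid : ∀ z, ∃ᶠ δ in 𝓝[>] 0, 2 * f z ≤ f (z - δ) + f (z + δ)) : ConvexOn ℝ univ f := by
  refine LinearOrder.convexOn_of_lt convex_univ fun x _ y _ hxy s t hs ht hst => ?_
  simp only [smul_eq_mul]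
  obtain rfl : s = 1 - t := by linarith
  have hslope : (y - x) * slope f x y = f y - f x := sub_smul_slope f x y
  have h := nonpos_of_frequently_two_mul_le (f := fun p => f p - (f x + slope f x y * (p - x)))
    (x := x) (y := y) (z := (1 - t) * x + t * y) (by fun_prop)
    (fun z _ => (hmid z).mono fun δ hδ => by linarith) (by simp) (by linarith)
    ⟨by nlinarith, by nlinarith⟩
  linear_combination h + t * hslope

end ConvexFunctions

section ConvexHull

variable {f h : ℝ → ℝ}

lemma exists_isConvexHullFn {g₀ : ℝ → ℝ} (hg₀ : ConvexOn ℝ univ g₀) (hle : ∀ x, g₀ x ≤ f x) :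
    ∃ h, IsConvexHullFn f h := by
  let L : Set (ℝ → ℝ) := {g | ConvexOn ℝ univ g ∧ ∀ x, g x ≤ f x}
  have : Nonempty L := ⟨⟨g₀, hg₀, hle⟩⟩
  have hbdd : ∀ x, BddAbove (range fun g : L => g.1 x) := fun x =>
    ⟨f x, by rintro _ ⟨g, rfl⟩; exact g.2.2 x⟩
  refine ⟨fun x => ⨆ g : L, g.1 x, ⟨convex_univ, fun x _ y _ s t hs ht hst => ?_⟩,
    fun x => ciSup_le fun g => g.2.2 x, fun g hg hgf x => le_ciSup (hbdd x) ⟨g, hg, hgf⟩⟩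
  refine ciSup_le fun g => (g.2.1.2 (mem_univ x) (mem_univ y) hs ht hst).trans ?_
  simp only [smul_eq_mul]
  gcongr
  · exact le_ciSup (hbdd x) g
  · exact le_ciSup (hbdd y) g

lemma IsConvexHullFn.add_affine (hull : IsConvexHullFn f h) (a b : ℝ) :
    IsConvexHullFn (fun x => f x + (a * x + b)) fun x => h x + (a * x + b) := by
  refine ⟨hull.1.add (convexOn_affine a b), fun x => by linarith [hull.2.1 x], fun g hg hgf x => ?_⟩
  have hsub : ConvexOn ℝ univ fun x => g x + (-a * x + -b) := hg.add (convexOn_affine _ _)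
  linarith [hull.2.2 _ hsub (fun y => by linarith [hgf y]) x]

lemma IsConvexHullFn.eventually_add_le_two_mul (hull : IsConvexHullFn f h) (hf : Continuous f)
    {z : ℝ} (hz : h z < f z) : ∀ᶠ δ in 𝓝[>] 0, h (z - δ) + h (z + δ) ≤ 2 * h z := by
  obtain ⟨d, hhd, hdf⟩ := exists_between hz
  have hgap : ∀ᶠ p in 𝓝 z, h p < d ∧ d < f p :=
    ((continuous_of_convexOn_univ hull.1).continuousAt.eventually_lt_const hhd).and
      (hf.continuousAt.eventually_const_lt hdf)
  obtain ⟨δ₀, hδ₀, hball⟩ := Metric.eventually_nhds_iff.1 hgap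
  filter_upwards [Ioo_mem_nhdsGT hδ₀] with δ hδ
  have hnear : ∀ p ∈ Icc (z - δ) (z + δ), h p < d ∧ d < f p := fun p hp => by
    refine hball ((abs_le.2 ⟨?_, ?_⟩).trans_lt hδ.2) <;> linarith [hp.1, hp.2]
  have hlt : z - δ < z + δ := by linarith [hδ.1]
  set x := z - δ
  set y := z + δ
  have hslope : (y - x) * slope h x y = h y - h x := sub_smul_slope h x y
  have hsecant : ∀ p, slope h x y * p + (h x - slope h x y * x) ≤ f p := by
    intro p
    by_cases hp : p ∈ Ioo x y
    · refine le_trans ?_ (hnear p (Ioo_subset_Icc_self hp)).2.le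
      have hhx := (hnear x (left_mem_Icc.2 hlt.le)).1
      have hhy := (hnear y (right_mem_Icc.2 hlt.le)).1
      rcases le_total 0 (slope h x y) with hs | hs
      · linarith [mul_le_mul_of_nonneg_left hp.2.le hs]
      · linarith [mul_le_mul_of_nonpos_left hp.1.le hs]
    · linarith [secant_le_of_notMem_Ioo hull.1 hlt hp, hull.2.1 p]
  have hmid : slope h x y * z = slope h x y * x + (y - x) * slope h x y / 2 := by
    simp only [x, y]; ring
  linarith [hull.2.2 _ (convexOn_affine _ _) hsecant z, hmid]

/- Where the hull `h` touches `f`, the function `P - h` touches the convex function `P - f` from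
above; elsewhere `h` is locally affine. Either way `P - h` is midpoint convex at small scales. -/
lemma IsConvexHullFn.convexOn_sub (hull : IsConvexHullFn f h) {P : ℝ → ℝ}
    (hP : ConvexOn ℝ univ P) (hPf : ConvexOn ℝ univ fun x => P x - f x) :
    ConvexOn ℝ univ fun x => P x - h x := by
  have hPc := continuous_of_convexOn_univ hP
  have hfc : Continuous f := by
    simpa [Pi.sub_def] using hPc.sub (continuous_of_convexOn_univ hPf)
  refine convexOn_univ_of_frequently_two_mul_le
    (hPc.sub (continuous_of_convexOn_univ hull.1)) fun z => Eventually.frequently ?_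
  rcases (hull.2.1 z).eq_or_lt with htouch | hlt
  · refine Eventually.of_forall fun δ => ?_
    linarith [two_mul_le_add_of_convexOn hPf z δ, hull.2.1 (z - δ), hull.2.1 (z + δ)]
  · filter_upwards [hull.eventually_add_le_two_mul hfc hlt] with δ hδ
    linarith [two_mul_le_add_of_convexOn hP z δ]

end ConvexHull

section ExtendedPotential

/-- The potential `∫ (k - x)⁺ σ(dx)` with values in `[0, ∞]`. Unlike `Ppot`, it carries no junk
values, so it is meaningful for measures that are not known to have a finite first moment. -/
def ePpot (σ : Measure ℝ) (k : ℝ) : ℝ≥0∞ := ∫⁻ x, ENNReal.ofReal (k - x) ∂σ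

lemma monotone_measure_Iic (σ : Measure ℝ) : Monotone fun t => σ (Iic t) := fun _ _ hst =>
  measure_mono (Iic_subset_Iic.2 hst)

lemma ePpot_eq_setLIntegral_Iic (σ : Measure ℝ) (k : ℝ) :
    ePpot σ k = ∫⁻ t in Iic k, σ (Iic t) := by
  calc ePpot σ k = ∫⁻ x, ENNReal.ofReal (max (k - x) 0) ∂σ := by
        simp [ePpot]
    _ = ∫⁻ t in Ioi 0, σ {x | t ≤ max (k - x) 0} :=
        lintegral_eq_lintegral_meas_le σ (Eventually.of_forall fun _ => le_max_right _ _)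
          (by fun_prop)
    _ = ∫⁻ t in (k - ·) ⁻¹' Iio k, σ (Iic (k - t)) := by
        have hpre : (k - ·) ⁻¹' Iio k = Ioi (0 : ℝ) := by ext; simp
        rw [hpre]
        refine setLIntegral_congr_fun measurableSet_Ioi fun t ht => ?_
        congr 1 with x
        simp [(mem_Ioi.1 ht).not_ge, le_sub_comm]
    _ = ∫⁻ t in Iio k, σ (Iic t) :=
        (volume.measurePreserving_sub_left k).setLIntegral_comp_preimage measurableSet_Iio
          (monotone_measure_Iic σ).measurable
    _ = ∫⁻ t in Iic k, σ (Iic t) := setLIntegral_congr Iio_ae_eq_Iic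

lemma ePpot_add_const (σ : Measure ℝ) (k : ℝ) {ε : ℝ} (hε : 0 ≤ ε) :
    ePpot σ (k + ε) = ePpot σ k + ∫⁻ t in Ioc k (k + ε), σ (Iic t) := by
  have hle : k ≤ k + ε := le_add_of_nonneg_right hε
  simp only [ePpot_eq_setLIntegral_Iic]
  rw [← lintegral_union measurableSet_Ioc (Iic_disjoint_Ioc le_rfl), Iic_union_Ioc_eq_Iic hle]

lemma measure_Iic_le_of_ePpot_eq {σ τ : Measure ℝ} (hfin : ∀ k, ePpot σ k ≠ ∞)
    (h : ∀ k, ePpot σ k = ePpot τ k) {k l : ℝ} (hkl : k < l) : σ (Iic k) ≤ τ (Iic l) := by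
  obtain ⟨ε, hε, rfl⟩ : ∃ ε, 0 < ε ∧ l = k + ε := ⟨l - k, sub_pos.2 hkl, by ring⟩
  have hincr : ∫⁻ t in Ioc k (k + ε), σ (Iic t) = ∫⁻ t in Ioc k (k + ε), τ (Iic t) := by
    have hk := h (k + ε)
    rw [ePpot_add_const σ k hε.le, ePpot_add_const τ k hε.le, ← h k] at hk
    exact (ENNReal.add_right_inj (hfin k)).1 hk
  have hbounds : σ (Iic k) * ENNReal.ofReal ε ≤ τ (Iic (k + ε)) * ENNReal.ofReal ε := by
    calc σ (Iic k) * ENNReal.ofReal ε = ∫⁻ _ in Ioc k (k + ε), σ (Iic k) := by simp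
      _ ≤ ∫⁻ t in Ioc k (k + ε), σ (Iic t) :=
          setLIntegral_mono' measurableSet_Ioc fun t ht => monotone_measure_Iic σ ht.1.le
      _ = ∫⁻ t in Ioc k (k + ε), τ (Iic t) := hincr
      _ ≤ ∫⁻ _ in Ioc k (k + ε), τ (Iic (k + ε)) :=
          setLIntegral_mono' measurableSet_Ioc fun t ht => monotone_measure_Iic τ ht.2
      _ = τ (Iic (k + ε)) * ENNReal.ofReal ε := by simp
  exact (ENNReal.mul_le_mul_iff_left (by simpa using hε) ENNReal.ofReal_ne_top).1 hbounds

lemma measure_Iic_ne_top_of_ePpot_ne_top {σ : Measure ℝ} (hfin : ∀ k, ePpot σ k ≠ ∞) (k : ℝ) :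
    σ (Iic k) ≠ ∞ := by
  refine ne_top_of_le_ne_top (hfin (k + 1)) ?_
  calc σ (Iic k) = ∫⁻ _ in Ioc k (k + 1), σ (Iic k) := by simp
    _ ≤ ∫⁻ t in Ioc k (k + 1), σ (Iic t) :=
        setLIntegral_mono' measurableSet_Ioc fun t ht => monotone_measure_Iic σ ht.1.le
    _ ≤ ePpot σ (k + 1) := by rw [ePpot_add_const σ k zero_le_one]; exact le_add_self

lemma tendsto_measure_Iic_nhdsGT {σ : Measure ℝ} (hfin : ∀ k, σ (Iic k) ≠ ∞) (k : ℝ) :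
    Tendsto (fun t => σ (Iic t)) (𝓝[>] k) (𝓝 (σ (Iic k))) := by
  have hinter : ⋂ t > k, Iic t = Iic k := by
    ext x
    simp only [mem_iInter, mem_Iic]
    exact ⟨le_of_forall_gt_imp_ge_of_dense, fun hx t ht => hx.trans ht.le⟩
  simpa only [hinter, Function.comp_def] using tendsto_measure_biInter_gt (μ := σ) (s := Iic)
    (fun _ _ => measurableSet_Iic.nullMeasurableSet) (fun _ _ _ hst => Iic_subset_Iic.2 hst)
    ⟨k + 1, lt_add_one k, hfin _⟩

lemma measure_eq_of_ePpot_eq {σ τ : Measure ℝ} (hfin : ∀ k, ePpot σ k ≠ ∞)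
    (h : ∀ k, ePpot σ k = ePpot τ k) : σ = τ := by
  have hfinτ : ∀ k, ePpot τ k ≠ ∞ := fun k => h k ▸ hfin k
  have hσ := measure_Iic_ne_top_of_ePpot_ne_top hfin
  have hτ := measure_Iic_ne_top_of_ePpot_ne_top hfinτ
  have hIic : ∀ k, σ (Iic k) = τ (Iic k) := fun k => le_antisymm
    (ge_of_tendsto (tendsto_measure_Iic_nhdsGT hτ k)
      (eventually_nhdsWithin_of_forall fun _ hl => measure_Iic_le_of_ePpot_eq hfin h hl))
    (ge_of_tendsto (tendsto_measure_Iic_nhdsGT hσ k)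
      (eventually_nhdsWithin_of_forall fun _ hl =>
        measure_Iic_le_of_ePpot_eq hfinτ (fun k => (h k).symm) hl))
  refine Measure.ext_of_Ioc' σ τ
    (fun a b _ => ne_top_of_le_ne_top (hσ b) (measure_mono Ioc_subset_Iic_self)) fun a b hab => ?_
  have hdiff : Ioc a b = Iic b \ Iic a := by ext; simp [and_comm]
  rw [hdiff, measure_sdiff (Iic_subset_Iic.2 hab.le) measurableSet_Iic.nullMeasurableSet (hσ a),
    measure_sdiff (Iic_subset_Iic.2 hab.le) measurableSet_Iic.nullMeasurableSet (hτ a), hIic, hIic]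

end ExtendedPotential

section MeasureOfConvexFunction

variable {ψ : ℝ → ℝ}

lemma monotone_rightDeriv_of_convexOn (hψ : ConvexOn ℝ univ ψ) :
    Monotone fun x => derivWithin ψ (Ioi x) x := by
  simpa only [interior_univ, monotoneOn_univ] using hψ.monotoneOn_rightDeriv

lemma setLIntegral_Iic_rightDeriv (hψ : ConvexOn ℝ univ ψ) (hlim : Tendsto ψ atBot (𝓝 0)) (k : ℝ) :
    ∫⁻ t in Iic k, ENNReal.ofReal (derivWithin ψ (Ioi t) t) = ENNReal.ofReal (ψ k) := by
  set r : ℝ → ℝ := fun x => derivWithin ψ (Ioi x) x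
  have hr0 : ∀ x, 0 ≤ r x := fun x =>
    ((monotone_of_convexOn_of_tendsto_atBot hψ hlim).monotoneOn _).derivWithin_nonneg
  have hint : ∀ a, IntervalIntegrable r volume a k := fun a =>
    (monotone_rightDeriv_of_convexOn hψ).intervalIntegrable
  have hftc : ∀ a, ∫ t in a..k, r t = ψ k - ψ a := fun a =>
    intervalIntegral.integral_eq_sub_of_hasDeriv_right (continuous_of_convexOn_univ hψ).continuousOn
      (fun x _ => hψ.hasDerivWithinAt_rightDeriv_of_mem_interior (by simp)) (hint a)
  have hlim_int : Tendsto (fun a => ∫ t in a..k, r t) atBot (𝓝 (ψ k)) := by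
    simpa only [hftc, sub_zero] using hlim.const_sub (ψ k)
  have hintegrable : IntegrableOn r (Iic k) :=
    integrableOn_Iic_of_intervalIntegral_norm_tendsto (ψ k) k (fun a => (hint a).1) tendsto_id
      (by simpa [Real.norm_of_nonneg (hr0 _)] using hlim_int)
  rw [← ofReal_integral_eq_lintegral_ofReal hintegrable (Eventually.of_forall hr0),
    tendsto_nhds_unique (intervalIntegral_tendsto_integral_Iic k hintegrable tendsto_id) hlim_int]

lemma tendsto_rightDeriv_atBot (hψ : ConvexOn ℝ univ ψ) (hlim : Tendsto ψ atBot (𝓝 0)) :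
    Tendsto (fun x => derivWithin ψ (Ioi x) x) atBot (𝓝 0) := by
  have hmono := monotone_of_convexOn_of_tendsto_atBot hψ hlim
  refine squeeze_zero (fun x => (hmono.monotoneOn _).derivWithin_nonneg) (fun x => ?_)
    (hlim.comp (tendsto_atBot_add_const_right _ 1 tendsto_id))
  have h := hψ.rightDeriv_le_slope_of_mem_interior (x := x) (y := x + 1) (by simp) (by simp)
    (lt_add_one x)
  rw [slope_def_field, add_sub_cancel_left, div_one] at h
  exact h.trans (sub_le_self _ (hmono.le_of_tendsto hlim x))

lemma exists_measure_ePpot_eq (hψ : ConvexOn ℝ univ ψ) (hlim : Tendsto ψ atBot (𝓝 0)) :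
    ∃ σ : Measure ℝ, SFinite σ ∧ ∀ k, ePpot σ k = ENNReal.ofReal (ψ k) := by
  have hmono := monotone_rightDeriv_of_convexOn hψ
  set r : ℝ → ℝ := fun x => derivWithin ψ (Ioi x) x
  set g := hmono.stieltjesFunction
  have hg_le : ∀ x, g x ≤ r (x + 1) := fun x => hmono.rightLim_le (lt_add_one x)
  have hr_le : ∀ x, r x ≤ g x := fun x => hmono.le_rightLim le_rfl
  have hr_lim : Tendsto r atBot (𝓝 0) := tendsto_rightDeriv_atBot hψ hlim
  have hg_lim : Tendsto g atBot (𝓝 0) :=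
    tendsto_of_tendsto_of_tendsto_of_le_of_le hr_lim
      (hr_lim.comp (tendsto_atBot_add_const_right _ 1 tendsto_id)) hr_le hg_le
  have hg_ae : ∀ᵐ x, g x = r x := measure_mono_null
    (fun x hx hc => hx (ContinuousAt.continuousWithinAt hc).rightLim_eq)
    (hmono.countable_not_continuousAt.measure_zero volume)
  refine ⟨g.measure, inferInstance, fun k => ?_⟩
  rw [ePpot_eq_setLIntegral_Iic, ← setLIntegral_Iic_rightDeriv hψ hlim]
  refine lintegral_congr_ae (ae_restrict_of_ae ?_)
  filter_upwards [hg_ae] with t ht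
  rw [g.measure_Iic hg_lim, sub_zero, ht]

end MeasureOfConvexFunction

section Potentials

variable {α β : Measure ℝ}

lemma MemM.add (hα : MemM α) (hβ : MemM β) : MemM (α + β) := by
  have := hα.1
  have := hβ.1
  exact ⟨inferInstance, hα.2.add_measure hβ.2⟩

lemma MemM.mono (hβ : MemM β) (h : α ≤ β) : MemM α := by
  have := hβ.1
  exact ⟨isFiniteMeasure_of_le β h, hβ.2.mono_measure h⟩

lemma MemM.map_neg (hα : MemM α) : MemM (α.map Neg.neg) := by
  have := hα.1
  exact ⟨inferInstance,
    (integrable_map_measure (by fun_prop) measurable_neg.aemeasurable).2 hα.2.neg⟩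

lemma MemM.integrable_max_sub (hα : MemM α) (k : ℝ) :
    Integrable (fun x : ℝ => max (x - k) 0) α := by
  have := hα.1
  exact (hα.2.sub (integrable_const k)).pos_part

lemma MemM.integrable_max_const_sub (hα : MemM α) (k : ℝ) :
    Integrable (fun x : ℝ => max (k - x) 0) α := by
  have := hα.1
  exact ((integrable_const k).sub hα.2).pos_part

lemma ePpot_eq_ofReal_Ppot (hα : MemM α) (k : ℝ) : ePpot α k = ENNReal.ofReal (Ppot α k) := by
  rw [Ppot, ofReal_integral_eq_lintegral_ofReal (hα.integrable_max_const_sub k)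
    (Eventually.of_forall fun x => le_max_right _ _)]
  simp [ePpot]

lemma Ppot_nonneg (α : Measure ℝ) (k : ℝ) : 0 ≤ Ppot α k :=
  integral_nonneg fun _ => le_max_right _ _

lemma Cpot_nonneg (α : Measure ℝ) (k : ℝ) : 0 ≤ Cpot α k :=
  integral_nonneg fun _ => le_max_right _ _

lemma Ppot_add (hα : MemM α) (hβ : MemM β) (k : ℝ) : Ppot (α + β) k = Ppot α k + Ppot β k :=
  integral_add_measure (hα.integrable_max_const_sub k) (hβ.integrable_max_const_sub k)

lemma Cpot_add (hα : MemM α) (hβ : MemM β) (k : ℝ) : Cpot (α + β) k = Cpot α k + Cpot β k :=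
  integral_add_measure (hα.integrable_max_sub k) (hβ.integrable_max_sub k)

lemma Ppot_mono (hβ : MemM β) (h : α ≤ β) (k : ℝ) : Ppot α k ≤ Ppot β k :=
  integral_mono_measure h (Eventually.of_forall fun _ => le_max_right _ _)
    (hβ.integrable_max_const_sub k)

lemma Ppot_map_neg (α : Measure ℝ) (k : ℝ) : Ppot (α.map Neg.neg) k = Cpot α (-k) := by
  rw [Ppot, integral_map measurable_neg.aemeasurable (by fun_prop), Cpot]
  simp only [sub_neg_eq_add, add_comm]

lemma Cpot_eq_Ppot_add (hα : MemM α) (k : ℝ) :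
    Cpot α k = Ppot α k + (∫ x, x ∂α - α.real univ * k) := by
  have := hα.1
  calc Cpot α k = ∫ x, (max (k - x) 0 + (x - k)) ∂α :=
        integral_congr_ae (Eventually.of_forall fun x => by grind)
    _ = Ppot α k + ∫ x, (x - k) ∂α :=
        integral_add (hα.integrable_max_const_sub k) (hα.2.sub (integrable_const k))
    _ = Ppot α k + (∫ x, x ∂α - α.real univ * k) := by
        rw [integral_sub hα.2 (integrable_const k), integral_const, smul_eq_mul]

lemma convexOn_max_sub (k : ℝ) : ConvexOn ℝ univ fun x : ℝ => max (x - k) 0 :=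
  ((convexOn_id convex_univ).sub (concaveOn_const k convex_univ)).sup (convexOn_const 0 convex_univ)

lemma convexOn_max_const_sub (k : ℝ) : ConvexOn ℝ univ fun x : ℝ => max (k - x) 0 :=
  ((convexOn_const k convex_univ).sub (concaveOn_id convex_univ)).sup (convexOn_const 0 convex_univ)

lemma convexOn_Ppot (hα : MemM α) : ConvexOn ℝ univ (Ppot α) := by
  refine ⟨convex_univ, fun x _ y _ s t hs ht hst => ?_⟩
  have hx := (hα.integrable_max_const_sub x).const_mul s
  have hy := (hα.integrable_max_const_sub y).const_mul t
  simp only [smul_eq_mul, Ppot]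
  rw [← integral_const_mul, ← integral_const_mul, ← integral_add hx hy]
  exact integral_mono (hα.integrable_max_const_sub _) (hx.add hy) fun z =>
    (convexOn_max_sub z).2 (mem_univ x) (mem_univ y) hs ht hst

lemma convexOn_Cpot (hα : MemM α) : ConvexOn ℝ univ (Cpot α) :=
  ((convexOn_Ppot hα).add (convexOn_affine (-α.real univ) (∫ x, x ∂α))).congr fun k _ => by
    rw [Cpot_eq_Ppot_add hα, Pi.add_apply]; ring

lemma antitone_Cpot (hα : MemM α) : Antitone (Cpot α) := fun k l hkl =>
  integral_mono (hα.integrable_max_sub l) (hα.integrable_max_sub k) fun x => by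
    dsimp only; gcongr

lemma tendsto_Cpot_atTop (hα : MemM α) : Tendsto (Cpot α) atTop (𝓝 0) := by
  rw [← integral_zero ℝ ℝ (μ := α)]
  refine tendsto_integral_filter_of_dominated_convergence (fun x => |x|)
    (Eventually.of_forall fun k => (hα.integrable_max_sub k).1) ?_ hα.2.abs
    (Eventually.of_forall fun x => tendsto_const_nhds.congr' ?_)
  · filter_upwards [eventually_ge_atTop 0] with k hk
    refine Eventually.of_forall fun x => ?_
    rw [Real.norm_of_nonneg (le_max_right _ _)]
    exact max_le ((sub_le_self x hk).trans (le_abs_self x)) (abs_nonneg x)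
  · filter_upwards [eventually_ge_atTop x] with k hk
    exact (max_eq_right (sub_nonpos.2 hk)).symm

lemma tendsto_Ppot_atBot (hα : MemM α) : Tendsto (Ppot α) atBot (𝓝 0) := by
  have hreflect : Ppot α = fun k => Cpot (α.map Neg.neg) (-k) := by
    ext k
    rw [← Ppot_map_neg, Measure.map_map measurable_neg measurable_neg]
    simp
  rw [hreflect]
  exact (tendsto_Cpot_atTop hα.map_neg).comp tendsto_neg_atBot_atTop

lemma tendsto_Ppot_div_atTop (hα : MemM α) :
    Tendsto (fun k => Ppot α k / k) atTop (𝓝 (α.real univ)) := by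
  have hlim : Tendsto (fun k => (Cpot α k - ∫ x, x ∂α) / k + α.real univ) atTop
      (𝓝 (0 + α.real univ)) :=
    (((tendsto_Cpot_atTop hα).sub_const _).div_atTop tendsto_id).add_const _
  rw [zero_add] at hlim
  refine hlim.congr' ?_
  filter_upwards [eventually_gt_atTop 0] with k hk
  rw [Cpot_eq_Ppot_add hα]
  field_simp
  ring

lemma real_univ_le_of_Ppot_le (hα : MemM α) (hβ : MemM β) (h : ∀ k, Ppot α k ≤ Ppot β k) :
    α.real univ ≤ β.real univ := by
  refine le_of_tendsto_of_tendsto (tendsto_Ppot_div_atTop hα) (tendsto_Ppot_div_atTop hβ) ?_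
  filter_upwards [eventually_ge_atTop 0] with k hk
  gcongr
  exact h k

lemma exists_le_Ppot_eq {P Q : ℝ → ℝ} (hα : MemM α) (hP : ConvexOn ℝ univ P)
    (hQ : ConvexOn ℝ univ Q) (hP0 : ∀ k, 0 ≤ P k) (hQ0 : ∀ k, 0 ≤ Q k)
    (hadd : ∀ k, P k + Q k = Ppot α k) : ∃ η ≤ α, ∀ k, Ppot η k = P k := by
  have hlim := tendsto_Ppot_atBot hα
  obtain ⟨η, -, hη⟩ := exists_measure_ePpot_eq hP
    (squeeze_zero hP0 (fun k => by linarith [hadd k, hQ0 k]) hlim)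
  obtain ⟨τ, -, hτ⟩ := exists_measure_ePpot_eq hQ
    (squeeze_zero hQ0 (fun k => by linarith [hadd k, hP0 k]) hlim)
  have hePpot : ∀ k, ePpot α k = ePpot (η + τ) k := fun k => by
    rw [ePpot, ePpot, lintegral_add_measure, ← ePpot, ← ePpot, ← ePpot, hη, hτ,
      ← ENNReal.ofReal_add (hP0 k) (hQ0 k), hadd, ePpot_eq_ofReal_Ppot hα]
  have hsum : α = η + τ := measure_eq_of_ePpot_eq
    (fun k => by rw [ePpot_eq_ofReal_Ppot hα]; exact ENNReal.ofReal_ne_top) hePpot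
  have hle : η ≤ α := hsum ▸ Measure.le_add_right le_rfl
  refine ⟨η, hle, fun k => ?_⟩
  rw [← ENNReal.ofReal_eq_ofReal_iff (Ppot_nonneg η k) (hP0 k),
    ← ePpot_eq_ofReal_Ppot (hα.mono hle), hη]

end Potentials

section Orders

variable {η χ : Measure ℝ} {f : ℝ → ℝ}

lemma LeCD.lePCD (h : LeCD η χ) : LePCD η χ := fun f _ => h f

lemma LePC.lePCD (h : LePC η χ) : LePCD η χ := fun f hf0 hf _ => h f hf0 hf

lemma LePCD.Ppot_le (h : LePCD η χ) (hη : MemM η) (hχ : MemM χ) (k : ℝ) : Ppot η k ≤ Ppot χ k :=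
  h _ (fun _ => le_max_right _ _) (convexOn_max_const_sub k) (fun _ _ hxy => by gcongr)
    (hη.integrable_max_const_sub k) (hχ.integrable_max_const_sub k)

lemma LePC.Cpot_le (h : LePC η χ) (hη : MemM η) (hχ : MemM χ) (k : ℝ) : Cpot η k ≤ Cpot χ k :=
  h _ (fun _ => le_max_right _ _) (convexOn_max_sub k) (hη.integrable_max_sub k)
    (hχ.integrable_max_sub k)

lemma LeCD.real_univ_eq [IsFiniteMeasure η] [IsFiniteMeasure χ] (h : LeCD η χ) :
    η.real univ = χ.real univ := by
  have hpos := h (fun _ => 1) (convexOn_const _ convex_univ) antitone_const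
    (integrable_const _) (integrable_const _)
  have hneg := h (fun _ => -1) (convexOn_const _ convex_univ) antitone_const
    (integrable_const _) (integrable_const _)
  simp only [integral_const, smul_eq_mul] at hpos hneg
  linarith

/- A convex `f` vanishing at `+∞` is a mixture of the functions `x ↦ (k - x)⁺`. -/
lemma lintegral_ofReal_le_of_ePpot_le [SFinite η] [SFinite χ] (h : ∀ k, ePpot η k ≤ ePpot χ k)
    (hf : ConvexOn ℝ univ f) (hlim : Tendsto f atTop (𝓝 0)) :
    ∫⁻ x, ENNReal.ofReal (f x) ∂η ≤ ∫⁻ x, ENNReal.ofReal (f x) ∂χ := by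
  obtain ⟨σ, _, hσ⟩ :=
    exists_measure_ePpot_eq (convexOn_comp_neg hf) (hlim.comp tendsto_neg_atBot_atTop)
  have hmixture : ∀ κ : Measure ℝ, SFinite κ →
      ∫⁻ x, ENNReal.ofReal (f x) ∂κ = ∫⁻ k, ePpot κ (-k) ∂σ := fun κ _ => by
    calc ∫⁻ x, ENNReal.ofReal (f x) ∂κ = ∫⁻ x, ∫⁻ k, ENNReal.ofReal (-x - k) ∂σ ∂κ :=
          lintegral_congr fun x => by rw [← ePpot, hσ, neg_neg]
      _ = ∫⁻ k, ∫⁻ x, ENNReal.ofReal (-x - k) ∂κ ∂σ := lintegral_lintegral_swap (by fun_prop)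
      _ = ∫⁻ k, ePpot κ (-k) ∂σ := by simp only [ePpot, neg_sub_comm]
  rw [hmixture η ‹_›, hmixture χ ‹_›]
  exact lintegral_mono fun k => h (-k)

lemma integral_le_of_Ppot_le_of_tendsto_zero (hη : MemM η) (hχ : MemM χ)
    (h : ∀ k, Ppot η k ≤ Ppot χ k) (hf : ConvexOn ℝ univ f) (hlim : Tendsto f atTop (𝓝 0))
    (hfη : Integrable f η) (hfχ : Integrable f χ) :
    ∫ x, f x ∂η ≤ ∫ x, f x ∂χ := by
  have := hη.1
  have := hχ.1
  have hf0 : ∀ x, 0 ≤ f x := fun x => by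
    have hreflect := hlim.comp tendsto_neg_atBot_atTop
    have hmono := monotone_of_convexOn_of_tendsto_atBot (convexOn_comp_neg hf) hreflect
    simpa using hmono.le_of_tendsto hreflect (-x)
  have hle := lintegral_ofReal_le_of_ePpot_le (η := η) (χ := χ) (fun k => by
    rw [ePpot_eq_ofReal_Ppot hη, ePpot_eq_ofReal_Ppot hχ]
    exact ENNReal.ofReal_le_ofReal (h k)) hf hlim
  rw [← ofReal_integral_eq_lintegral_ofReal hfη (Eventually.of_forall hf0),
    ← ofReal_integral_eq_lintegral_ofReal hfχ (Eventually.of_forall hf0)] at hle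
  exact (ENNReal.ofReal_le_ofReal_iff (integral_nonneg hf0)).1 hle

theorem lePCD_iff_Ppot_le (hη : MemM η) (hχ : MemM χ) :
    LePCD η χ ↔ ∀ k, Ppot η k ≤ Ppot χ k := by
  refine ⟨fun h => h.Ppot_le hη hχ, fun h f hf0 hf hanti hfη hfχ => ?_⟩
  have := hη.1
  have := hχ.1
  have hbdd : BddBelow (range f) := ⟨0, by rintro _ ⟨x, rfl⟩; exact hf0 x⟩
  set c := ⨅ x, f x
  have hc0 : 0 ≤ c := le_ciInf hf0
  have hvanishing : ∫ x, (f x - c) ∂η ≤ ∫ x, (f x - c) ∂χ :=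
    integral_le_of_Ppot_le_of_tendsto_zero hη hχ h
      (hf.sub (concaveOn_const c convex_univ))
      (by simpa only [c, sub_self] using (tendsto_atTop_ciInf hanti hbdd).sub_const c)
      (hfη.sub (integrable_const c)) (hfχ.sub (integrable_const c))
  rw [integral_sub hfη (integrable_const c), integral_sub hfχ (integrable_const c),
    integral_const, integral_const, smul_eq_mul, smul_eq_mul] at hvanishing
  have hconst := mul_le_mul_of_nonneg_right (real_univ_le_of_Ppot_le hη hχ h) hc0
  linarith

lemma LePCD.mono_left {η' : Measure ℝ} (h : LePCD η χ) (hη : MemM η) (hχ : MemM χ) (hle : η' ≤ η) :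
    LePCD η' χ :=
  (lePCD_iff_Ppot_le (hη.mono hle) hχ).2 fun k => (Ppot_mono hη hle k).trans (h.Ppot_le hη hχ k)

lemma integrable_comp_min [IsFiniteMeasure η] (hf : Measurable f) (hfη : Integrable f η) (b : ℝ) :
    Integrable (fun x => f (min x b)) η := by
  refine (hfη.norm.add (integrable_const |f b|)).mono'
    (Measurable.aestronglyMeasurable (by fun_prop)) (Eventually.of_forall fun x => ?_)
  rcases le_total x b with hx | hx <;> simp [hx]

lemma tendsto_integral_comp_min_atTop [IsFiniteMeasure η] (hanti : Antitone f)
    (hfη : Integrable f η) :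
    Tendsto (fun b => ∫ x, f (min x b) ∂η) atTop (𝓝 (∫ x, f x ∂η)) := by
  refine tendsto_integral_filter_of_dominated_convergence (fun x => |f x| + |f 0|)
    (Eventually.of_forall fun b => (integrable_comp_min hanti.measurable hfη b).1) ?_
    (hfη.abs.add (integrable_const _))
    (Eventually.of_forall fun x => tendsto_const_nhds.congr' ?_)
  · filter_upwards [eventually_ge_atTop 0] with b hb
    refine Eventually.of_forall fun x => ?_
    rcases le_total x b with hx | hx
    · simp [hx]
    · rw [min_eq_right hx, add_comm, Real.norm_eq_abs]
      exact (abs_le_max_abs_abs (hanti hx) (hanti hb)).trans (by grind)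
  · filter_upwards [eventually_ge_atTop x] with b hb
    rw [min_eq_left hb]

theorem leCD_iff (hη : MemM η) (hχ : MemM χ) :
    LeCD η χ ↔ η.real univ = χ.real univ ∧ ∀ k, Ppot η k ≤ Ppot χ k := by
  have := hη.1
  have := hχ.1
  refine ⟨fun h => ⟨h.real_univ_eq, h.lePCD.Ppot_le hη hχ⟩,
    fun ⟨hmass, h⟩ f hf hanti hfη hfχ => ?_⟩
  refine le_of_tendsto_of_tendsto' (tendsto_integral_comp_min_atTop hanti hfη)
    (tendsto_integral_comp_min_atTop hanti hfχ) fun b => ?_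
  have hη_min := integrable_comp_min hanti.measurable hfη b
  have hχ_min := integrable_comp_min hanti.measurable hfχ b
  have htruncated : ∫ x, (f (min x b) - f b) ∂η ≤ ∫ x, (f (min x b) - f b) ∂χ :=
    (lePCD_iff_Ppot_le hη hχ).2 h _ (fun x => sub_nonneg.2 (hanti (min_le_right x b)))
      ((convexOn_comp_min hf (hanti.antitoneOn _)).sub (concaveOn_const _ convex_univ))
      (fun x y hxy => sub_le_sub_right (hanti (min_le_min_right b hxy)) _)
      (hη_min.sub (integrable_const _)) (hχ_min.sub (integrable_const _))
  rw [integral_sub hη_min (integrable_const _), integral_sub hχ_min (integrable_const _),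
    integral_const, integral_const, hmass] at htruncated
  linarith

lemma integral_le_of_monotone_of_Cpot_le (hη : MemM η) (hχ : MemM χ)
    (h : ∀ k, Cpot η k ≤ Cpot χ k) (hf0 : ∀ x, 0 ≤ f x) (hf : ConvexOn ℝ univ f)
    (hmono : Monotone f) (hfη : Integrable f η) (hfχ : Integrable f χ) :
    ∫ x, f x ∂η ≤ ∫ x, f x ∂χ := by
  have hneg : LePCD (η.map Neg.neg) (χ.map Neg.neg) :=
    (lePCD_iff_Ppot_le hη.map_neg hχ.map_neg).2 fun k => by simpa only [Ppot_map_neg] using h (-k)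
  have hmeas (κ : Measure ℝ) : AEStronglyMeasurable (fun x => f (-x)) (κ.map Neg.neg) :=
    (continuous_of_convexOn_univ (convexOn_comp_neg hf)).aestronglyMeasurable
  have hint {κ : Measure ℝ} (hκ : Integrable f κ) : Integrable (fun x => f (-x)) (κ.map Neg.neg) :=
    (integrable_map_measure (hmeas κ) measurable_neg.aemeasurable).2
      (by simpa [Function.comp_def] using hκ)
  have hle := hneg (fun x => f (-x)) (fun x => hf0 (-x)) (convexOn_comp_neg hf)
    (fun x y hxy => hmono (neg_le_neg hxy)) (hint hfη) (hint hfχ)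
  simpa only [integral_map measurable_neg.aemeasurable (hmeas _), neg_neg] using hle

theorem lePC_iff (hη : MemM η) (hχ : MemM χ) :
    LePC η χ ↔ (∀ k, Ppot η k ≤ Ppot χ k) ∧ ∀ k, Cpot η k ≤ Cpot χ k := by
  refine ⟨fun h => ⟨h.lePCD.Ppot_le hη hχ, h.Cpot_le hη hχ⟩, fun ⟨hP, hC⟩ f hf0 hf hfη hfχ => ?_⟩
  have := hη.1
  have := hχ.1
  rcases monotone_or_antitone_or_exists_isMin hf with hmono | hanti | ⟨b, hmin⟩
  · exact integral_le_of_monotone_of_Cpot_le hη hχ hC hf0 hf hmono hfη hfχ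
  · exact (lePCD_iff_Ppot_le hη hχ).2 hP f hf0 hf hanti hfη hfχ
  have hanti := antitoneOn_Iic_of_convexOn_of_isMin hf hmin
  have hmono := monotoneOn_Ici_of_convexOn_of_isMin hf hmin
  have hmeas := (continuous_of_convexOn_univ hf).measurable
  have hη_min := integrable_comp_min hmeas hfη b
  have hχ_min := integrable_comp_min hmeas hfχ b
  have hsplit : (fun x => f x - f (min x b)) = fun x => f (max x b) - f b := by
    ext x
    rcases le_total x b with hx | hx <;> simp [hx]
  have hleft : ∫ x, f (min x b) ∂η ≤ ∫ x, f (min x b) ∂χ :=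
    (lePCD_iff_Ppot_le hη hχ).2 hP _ (fun x => hf0 _) (convexOn_comp_min hf hanti)
      (fun x y hxy => hanti (min_le_right x b) (min_le_right y b) (min_le_min_right b hxy))
      hη_min hχ_min
  have hright : ∫ x, (f (max x b) - f b) ∂η ≤ ∫ x, (f (max x b) - f b) ∂χ :=
    integral_le_of_monotone_of_Cpot_le hη hχ hC (fun x => sub_nonneg.2 (hmin _))
      ((convexOn_comp_max hf hmono).sub (concaveOn_const _ convex_univ))
      (fun x y hxy => sub_le_sub_right
        (hmono (le_max_right x b) (le_max_right y b) (max_le_max_right b hxy)) _)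
      (hsplit ▸ hfη.sub hη_min) (hsplit ▸ hfχ.sub hχ_min)
  rw [← hsplit, integral_sub hfη hη_min, integral_sub hfχ hχ_min] at hright
  linarith

end Orders

section Shadow

variable {α ν' S : Measure ℝ}

lemma IsShadow.Ppot_le_sub (hα : MemM α) (hν' : MemM ν') (hS : IsShadow α (S + ν') S) (k : ℝ) :
    Ppot ν' k ≤ Ppot (S + ν') k - Ppot α k := by
  linarith [Ppot_add hS.1 hν' k, hS.2.1.lePCD.Ppot_le hα hS.1 k]

/- By `convexOn_sub`, `P_ν - h` is the potential of a measure `η ≤ ν`, and `α ≤_cd η`; minimality of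
the shadow gives `P_S ≤ P_ν - h`. -/
lemma IsShadow.le_of_isConvexHullFn (hα : MemM α) (hν' : MemM ν') (hS : IsShadow α (S + ν') S)
    {h : ℝ → ℝ} (hull : IsConvexHullFn (fun k => Ppot (S + ν') k - Ppot α k) h) (k : ℝ) :
    h k ≤ Ppot ν' k := by
  have hle := hull.2.2 _ (convexOn_Ppot hν') (hS.Ppot_le_sub hα hν')
  obtain ⟨hSM, hαS, -, hleast⟩ := hS
  have hν := hSM.add hν'
  have hadd : ∀ k, Ppot (S + ν') k = Ppot S k + Ppot ν' k := Ppot_add hSM hν'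
  set P : ℝ → ℝ := fun k => Ppot (S + ν') k - h k
  have hαP : ∀ k, Ppot α k ≤ P k := fun k => by linarith [hull.2.1 k]
  have hP : ConvexOn ℝ univ P := hull.convexOn_sub (convexOn_Ppot hν)
    ((convexOn_Ppot hα).congr fun k _ => by ring)
  obtain ⟨η, hην, hη⟩ := exists_le_Ppot_eq hν hP hull.1
    (fun k => (Ppot_nonneg α k).trans (hαP k)) (fun k => (Ppot_nonneg ν' k).trans (hle k))
    (fun k => sub_add_cancel _ _)
  have hηM : MemM η := hν.mono hην
  have hαη : ∀ k, Ppot α k ≤ Ppot η k := fun k => (hαP k).trans_eq (hη k).symm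
  have hηS : ∀ k, Ppot η k ≤ Ppot S k := fun k => by linarith [hη k, hadd k, hle k]
  have hmass : α.real univ = η.real univ := by
    refine (real_univ_le_of_Ppot_le hα hηM hαη).antisymm ?_
    rw [((leCD_iff hα hSM).1 hαS).1]
    exact real_univ_le_of_Ppot_le hηM hSM hηS
  have hSη := (hleast η hηM ((leCD_iff hα hηM).2 ⟨hmass, hαη⟩) fun A _ => hην A).lePCD.Ppot_le
    hSM hηM k
  linarith [hη k, hadd k]

theorem IsShadow.isConvexHullFn_Ppot (hα : MemM α) (hν' : MemM ν') (hS : IsShadow α (S + ν') S) :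
    IsConvexHullFn (fun k => Ppot (S + ν') k - Ppot α k) (Ppot ν') := by
  have hconv := convexOn_Ppot hν'
  have hminorant := hS.Ppot_le_sub hα hν'
  obtain ⟨h, hull⟩ := exists_isConvexHullFn hconv hminorant
  have heq : Ppot ν' = h := funext fun k =>
    (hull.2.2 _ hconv hminorant k).antisymm (hS.le_of_isConvexHullFn hα hν' hull k)
  rwa [heq]

theorem IsShadow.isConvexHullFn_Cpot (hα : MemM α) (hν' : MemM ν') (hS : IsShadow α (S + ν') S) :
    IsConvexHullFn (fun k => Cpot (S + ν') k - Cpot α k + (∫ x, x ∂α - ∫ x, x ∂S)) (Cpot ν') := by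
  have hmass := ((leCD_iff hα hS.1).1 hS.2.1).1
  convert (hS.isConvexHullFn_Ppot hα hν').add_affine (-ν'.real univ) (∫ x, x ∂ν') using 2 with k k
  · rw [Cpot_add hS.1 hν', Ppot_add hS.1 hν', Cpot_eq_Ppot_add hα, Cpot_eq_Ppot_add hS.1,
      Cpot_eq_Ppot_add hν', hmass]
    ring
  · rw [Cpot_eq_Ppot_add hν']
    ring

theorem IsShadow.isLUB_Cpot_sub (hα : MemM α) (hν' : MemM ν') (hS : IsShadow α (S + ν') S) :
    IsLUB (range fun k => Cpot α k - Cpot (S + ν') k) (∫ x, x ∂α - ∫ x, x ∂S) := by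
  have hull := hS.isConvexHullFn_Cpot hα hν'
  refine ⟨?_, fun c hc => ?_⟩
  · rintro _ ⟨k, rfl⟩
    linarith [hull.2.1 k, Cpot_nonneg ν' k]
  · have hconst : ∀ k, ∫ x, x ∂α - ∫ x, x ∂S - c ≤ Cpot ν' k :=
      hull.2.2 _ (convexOn_const _ convex_univ) fun k => by linarith [hc (mem_range_self k)]
    linarith [ge_of_tendsto' (tendsto_Cpot_atTop hν') hconst]

lemma LePCD.bddAbove_Cpot_sub {β ν : Measure ℝ} (hβ : MemM β) (hν : MemM ν) (h : LePCD β ν) :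
    BddAbove (range fun k => Cpot β k - Cpot ν k) := by
  have hP := h.Ppot_le hβ hν
  have hmass := real_univ_le_of_Ppot_le hβ hν hP
  refine ⟨max (Cpot β 0) (∫ x, x ∂β - ∫ x, x ∂ν), ?_⟩
  rintro _ ⟨k, rfl⟩
  rcases le_total 0 k with hk | hk
  · exact le_max_of_le_left (by linarith [antitone_Cpot hβ hk, Cpot_nonneg ν k])
  · refine le_max_of_le_right ?_
    linarith [hP k, mul_le_mul_of_nonpos_right hmass hk, Cpot_eq_Ppot_add hβ k,
      Cpot_eq_Ppot_add hν k]

theorem c_constant_iff_lePC_general {ρ : Measure ℝ} (hα : MemM α) (hρ : MemM ρ) (hν' : MemM ν')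
    (hS : IsShadow α (S + ν') S) (hle : LePCD (α + ρ) (S + ν')) :
    (⨆ k : ℝ, (Cpot α k - Cpot (S + ν') k)) = (⨆ k : ℝ, (Cpot (α + ρ) k - Cpot (S + ν') k)) ↔
      LePC ρ ν' := by
  have hν := hS.1.add hν'
  have hPadd := Ppot_add hα hρ
  have hCadd := Cpot_add hα hρ
  have hullP := hS.isConvexHullFn_Ppot hα hν'
  have hullC := hS.isConvexHullFn_Cpot hα hν'
  have hbdd := hle.bddAbove_Cpot_sub (hα.add hρ) hν
  rw [lePC_iff hρ hν', (hS.isLUB_Cpot_sub hα hν').ciSup_eq]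
  constructor
  · intro hc
    have hPle := hle.Ppot_le (hα.add hρ) hν
    exact ⟨hullP.2.2 _ (convexOn_Ppot hρ) fun k => by linarith [hPadd k, hPle k],
      hullC.2.2 _ (convexOn_Cpot hρ) fun k => by linarith [hCadd k, le_ciSup hbdd k]⟩
  · rintro ⟨-, hC⟩
    refine le_antisymm ?_ (ciSup_le fun k => by linarith [hCadd k, hC k, hullC.2.1 k])
    rw [← (hS.isLUB_Cpot_sub hα hν').ciSup_eq]
    exact ciSup_mono hbdd fun k => by linarith [hCadd k, Cpot_nonneg ρ k]

end Shadow

section Lift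

variable {μ : Measure ℝ} [IsProbabilityMeasure μ] {u : ℝ}

lemma le_measureReal_Iic_quantile (hu : u < 1) : u ≤ μ.real (Iic (quantile μ u)) := by
  have hcdf (k : ℝ) : ProbabilityTheory.cdf μ k = μ.real (Iic k) :=
    ProbabilityTheory.cdf_eq_real μ k
  have hbdd : BddAbove {k : ℝ | (μ (Iic k)).toReal < u} := by
    obtain ⟨K, hK⟩ := ((ProbabilityTheory.tendsto_cdf_atTop μ).eventually_const_lt hu).exists
    refine ⟨K, fun k hk => le_of_not_gt fun hlt => ?_⟩
    exact ((hK.le.trans (ProbabilityTheory.monotone_cdf μ hlt.le)).trans_eq (hcdf k)).not_gt hk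
  rw [← hcdf]
  refine ge_of_tendsto (((ProbabilityTheory.cdf μ).right_continuous _).mono Ioi_subset_Ici_self)
    (eventually_nhdsWithin_of_forall fun k hk => ?_)
  rw [hcdf]
  exact not_lt.1 fun hlt => (le_csSup hbdd hlt).not_gt hk

lemma muU_le (μ : Measure ℝ) [IsProbabilityMeasure μ] (u : ℝ) : muU μ u ≤ μ := by
  rw [muU]
  split_ifs with hu0 hu1
  · exact Measure.zero_le μ
  · exact le_rfl
  set q := quantile μ u
  have hatom : ENNReal.ofReal (u - μ.real (Iio q)) ≤ μ {q} := by
    have hunion : μ.real (Iic q) = μ.real (Iio q) + μ.real {q} := by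
      rw [← Iio_union_right, measureReal_union (by simp) (measurableSet_singleton q)]
    refine ENNReal.ofReal_le_of_le_toReal ?_
    linarith [le_measureReal_Iic_quantile (μ := μ) (not_le.1 hu1), measureReal_def μ {q}]
  calc μ.restrict (Iio q) + ENNReal.ofReal (u - μ.real (Iio q)) • Measure.dirac q
      ≤ μ.restrict (Iio q) + μ {q} • Measure.dirac q := by gcongr
    _ = μ.restrict (Iic q) := by
        rw [← Measure.restrict_singleton, ← Measure.restrict_union (by simp)
          (measurableSet_singleton q), Iio_union_right]
    _ ≤ μ := Measure.restrict_le_self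

end Lift

/-- Corollary 4.3: `c(u) = c(v)` iff `μ_v - μ_u` is in positive convex order
with `ν - S^ν(μ_u)`. -/
theorem c_constant_iff_lePC
    (μ ν : MeasureTheory.Measure ℝ)
    [MeasureTheory.IsProbabilityMeasure μ] [MeasureTheory.IsProbabilityMeasure ν]
    (hμ : MeasureTheory.Integrable (fun x : ℝ => x) μ)
    (hν : MeasureTheory.Integrable (fun x : ℝ => x) ν)
    (hcd : LeCD μ ν)
    (u v : ℝ) (hu : u ∈ Set.Ioo (0:ℝ) 1) (hv : v ∈ Set.Ioo (0:ℝ) 1) (huv : u < v)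
    (Su : MeasureTheory.Measure ℝ) (hSu : IsShadow (muU μ u) ν Su)
    (ρ : MeasureTheory.Measure ℝ) (hρ : MemM ρ) (hρsum : muU μ u + ρ = muU μ v)
    (ν' : MeasureTheory.Measure ℝ) (hν' : MemM ν') (hνsum : Su + ν' = ν) :
    (⨆ k : ℝ, (Cpot (muU μ u) k - Cpot ν k)) =
      (⨆ k : ℝ, (Cpot (muU μ v) k - Cpot ν k)) ↔ LePC ρ ν' := by
  subst hνsum
  have hμM : MemM μ := ⟨inferInstance, hμ⟩
  rw [← hρsum]
  exact c_constant_iff_lePC_general (hμM.mono (muU_le μ u)) hρ hν' hSu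
    (hρsum ▸ hcd.lePCD.mono_left hμM ⟨inferInstance, hν⟩ (muU_le μ v))
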